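/- Let k be a field and C a Krull–Schmidt, Hom-finite, k-linear triangulated category with a cluster tilting object T; write T = add T. Let X and Z be indecomposable objects of C. (a-1) If X ∉ T and X ∉ T[1], then X admits an almost split triangle X → Y' → Z' → X[1] with Y' ∉ T and Z' ∉ T. (a-2) If X ∈ T[1], then X admits an almost split triangle X → Y' → Z' → X[1] with Z' ∈ T. (b-1) If Z ∉ T and Z ∉ T[−1], then Z admits an almost split triangle X'' → Y'' → Z → X''[1] with Y'' ∉ T and X'' ∉ T. (b-2) If Z ∈ T[−1], then Z admits an almost split triangle X'' → Y'' → Z → X''[1] with X'' ∈ T. -/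

import Mathlib

open CategoryTheory CategoryTheory.Limits CategoryTheory.Pretriangulated

universe v u

variable (k : Type*) [Field k]
variable (C : Type u) [Category.{v} C] [Preadditive C] [HasZeroObject C] [HasShift C ℤ]
  [∀ n : ℤ, (shiftFunctor C n).Additive] [Pretriangulated C]
  [HasFiniteBiproducts C] [Linear k C]

/-- `C` is Krull–Schmidt: every object is isomorphic to a finite direct sum of objects
with local endomorphism rings. -/
def KrullSchmidt : Prop :=
  ∀ X : C, ∃ (n : ℕ) (f : Fin n → C) (_ : X ≅ ⨁ f), ∀ i, IsLocalRing (End (f i))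

/-- `add T`: the objects isomorphic to direct summands of finite direct sums of copies
of `T`, described as retracts of finite powers `T^n`. -/
def addSet (T : C) : Set C :=
  {X | ∃ (n : ℕ) (i : X ⟶ ⨁ (fun _ : Fin n => T)) (p : ⨁ (fun _ : Fin n => T) ⟶ X),
    i ≫ p = 𝟙 X}

/-- `T` is a cluster tilting object: for every `X`, membership in `add T` is equivalent
to the vanishing of `Hom(T, X[1])` and to the vanishing of `Hom(X, T[1])`. -/
def ClusterTilting (T : C) : Prop :=
  ∀ X : C, (X ∈ addSet C T ↔ ∀ f : T ⟶ X⟦(1 : ℤ)⟧, f = 0) ∧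
           (X ∈ addSet C T ↔ ∀ f : X ⟶ T⟦(1 : ℤ)⟧, f = 0)

/-- An object is indecomposable if it is nonzero and in any biproduct decomposition one
summand vanishes. -/
def Indecomposable (X : C) : Prop :=
  ¬ IsZero X ∧ ∀ (Y Z : C), (X ≅ Y ⊞ Z) → IsZero Y ∨ IsZero Z

/-- `x : A ⟶ B` is left almost split: any morphism out of `A` which is not a section
factors through `x`. -/
def LeftAlmostSplit {A B : C} (x : A ⟶ B) : Prop :=
  ∀ ⦃M : C⦄ (a : A ⟶ M), (¬ ∃ r : M ⟶ A, a ≫ r = 𝟙 A) → ∃ m : B ⟶ M, x ≫ m = a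

/-- `y : B ⟶ X` is right almost split: any morphism into `X` which is not a retraction
factors through `y`. -/
def RightAlmostSplit {B X : C} (y : B ⟶ X) : Prop :=
  ∀ ⦃N : C⦄ (c : N ⟶ X), (¬ ∃ s : X ⟶ N, s ≫ c = 𝟙 X) → ∃ n : N ⟶ B, n ≫ y = c

/-- An almost split (Auslander–Reiten) triangle: a nonsplit distinguished triangle whose
first morphism is left almost split and whose second morphism is right almost split. -/
def IsAlmostSplitTriangle {A B X : C} (x : A ⟶ B) (y : B ⟶ X)
    (δ : X ⟶ A⟦(1 : ℤ)⟧) : Prop :=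
  (Triangle.mk x y δ ∈ distTriang C) ∧ δ ≠ 0 ∧
    LeftAlmostSplit C x ∧ RightAlmostSplit C y

/-!
Let `Z` have a local endomorphism ring. A functional `φ` on `End Z` that vanishes on the non-units
but not at `1` induces a map `Hom(-, Z) → D Hom(Z, -)` whose kernel consists of the
non-retractions, so a right almost split morphism `Y → Z` is a generator of this kernel. Such a
generator exists because `C = add T * (add T)[1]`: one first covers the kernel on `add T`, then
corrects on `(add T)[1]`, where every functional can be realised after enlarging the target.
Projecting the connecting morphism of `Y → Z` onto a suitable local summand of `X₀`, where the
triangle is `X₀ → Y → Z → X₀[1]`, gives an almost split triangle. Starting from `X` one works in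
the opposite category.

In an almost split triangle `X → Y → Z → X[1]` every nonzero morphism out of `Z`, and every nonzero
morphism into `X[1]`, is a factor of the connecting morphism. Hence `Hom(Z, W) = 0` if and only if
`Hom(W, X[1]) = 0`; the cases `W = T[1]` and `W = T` decide the membership of `Z` and `X` in
`add T`.
-/

section Preadditive

variable {D : Type*} [Category* D] [Preadditive D]

/-- `A ⟶ B ⟶ E` composes to zero, `f` is a weak kernel of `g` and `g` is a weak cokernel of `f`;
consecutive morphisms of a distinguished triangle are the motivating example. -/
structure IsWeakKernelCokernelPair {A B E : D} (f : A ⟶ B) (g : B ⟶ E) : Prop where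
  zero : f ≫ g = 0
  exists_lift : ∀ ⦃W : D⦄ (t : W ⟶ B), t ≫ g = 0 → ∃ l : W ⟶ A, l ≫ f = t
  exists_desc : ∀ ⦃W : D⦄ (t : B ⟶ W), f ≫ t = 0 → ∃ l : E ⟶ W, g ≫ l = t

variable (D) in
/-- Every morphism of `D` is the first and the second member of a weak kernel-cokernel pair.
This is all that the construction of almost split morphisms uses from a triangulation, and it is
self-dual. -/
class HasWeakKernelCokernelPairs : Prop where
  exists_cokernel : ∀ ⦃A B : D⦄ (f : A ⟶ B), ∃ (E : D) (g : B ⟶ E), IsWeakKernelCokernelPair f g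
  exists_kernel : ∀ ⦃B E : D⦄ (g : B ⟶ E), ∃ (A : D) (f : A ⟶ B), IsWeakKernelCokernelPair f g

theorem IsWeakKernelCokernelPair.op {A B E : D} {f : A ⟶ B} {g : B ⟶ E}
    (h : IsWeakKernelCokernelPair f g) : IsWeakKernelCokernelPair g.op f.op where
  zero := by rw [← op_comp, h.zero, op_zero]
  exists_lift _ t ht := by
    obtain ⟨l, hl⟩ := h.exists_desc t.unop (Quiver.Hom.op_inj ht)
    exact ⟨l.op, Quiver.Hom.unop_inj hl⟩
  exists_desc _ t ht := by
    obtain ⟨l, hl⟩ := h.exists_lift t.unop (Quiver.Hom.op_inj ht)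
    exact ⟨l.op, Quiver.Hom.unop_inj hl⟩

instance hasWeakKernelCokernelPairs_op [HasWeakKernelCokernelPairs D] :
    HasWeakKernelCokernelPairs Dᵒᵖ where
  exists_cokernel _ _ f :=
    let ⟨_, _, h⟩ := HasWeakKernelCokernelPairs.exists_kernel f.unop
    ⟨_, _, h.op⟩
  exists_kernel _ _ g :=
    let ⟨_, _, h⟩ := HasWeakKernelCokernelPairs.exists_cokernel g.unop
    ⟨_, _, h.op⟩

theorem exists_weakPullback [HasWeakKernelCokernelPairs D] {B U V : D} (q : B ⟶ U) (u : V ⟶ U) :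
    ∃ (Y : D) (y : Y ⟶ V), ∀ ⦃W : D⦄ (f : W ⟶ V),
      (∃ l : W ⟶ Y, l ≫ y = f) ↔ ∃ l : W ⟶ B, l ≫ q = f ≫ u := by
  obtain ⟨S, t, hqt⟩ := HasWeakKernelCokernelPairs.exists_cokernel q
  obtain ⟨Y, y, hy⟩ := HasWeakKernelCokernelPairs.exists_kernel (u ≫ t)
  refine ⟨Y, y, fun W f => ⟨?_, ?_⟩⟩
  · rintro ⟨l, rfl⟩
    exact hqt.exists_lift _ (by simp only [Category.assoc, hy.zero, comp_zero])
  · rintro ⟨l, hl⟩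
    exact hy.exists_lift f (by rw [← Category.assoc, ← hl, Category.assoc, hqt.zero, comp_zero])

section AddSet

variable [HasFiniteBiproducts D] {G P Q : D}

theorem mem_addSet_iff :
    P ∈ addSet D G ↔
      ∃ (n : ℕ) (i : Fin n → (P ⟶ G)) (p : Fin n → (G ⟶ P)), ∑ j, i j ≫ p j = 𝟙 P := by
  constructor
  · rintro ⟨n, i, p, h⟩
    refine ⟨n, fun j => i ≫ biproduct.π _ j, fun j => biproduct.ι (fun _ => G) j ≫ p, ?_⟩
    calc ∑ j, (i ≫ biproduct.π _ j) ≫ biproduct.ι (fun _ => G) j ≫ p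
        = i ≫ (∑ j, biproduct.π _ j ≫ biproduct.ι (fun _ => G) j) ≫ p := by
          simp only [Preadditive.sum_comp, Preadditive.comp_sum, Category.assoc]
      _ = 𝟙 P := by rw [biproduct.total, Category.id_comp, h]
  · rintro ⟨n, i, p, h⟩
    exact ⟨n, biproduct.lift i, biproduct.desc p, by rw [biproduct.lift_desc, h]⟩

theorem biproduct_mem_addSet (G : D) (n : ℕ) : (⨁ fun _ : Fin n => G) ∈ addSet D G :=
  ⟨n, 𝟙 _, 𝟙 _, Category.comp_id _⟩

theorem self_mem_addSet (G : D) : G ∈ addSet D G :=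
  mem_addSet_iff.2 ⟨1, fun _ => 𝟙 G, fun _ => 𝟙 G, by simp⟩

theorem mem_addSet_of_retract (hP : P ∈ addSet D G) {s : Q ⟶ P} {r : P ⟶ Q} (hsr : s ≫ r = 𝟙 Q) :
    Q ∈ addSet D G := by
  obtain ⟨n, i, p, hip⟩ := hP
  exact ⟨n, s ≫ i, p ≫ r, by rw [Category.assoc, reassoc_of% hip, hsr]⟩

theorem exists_lift_of_mem_addSet (hP : P ∈ addSet D G) {B V : D} {q : B ⟶ V} {f : P ⟶ V}
    (hf : ∀ g : G ⟶ P, ∃ l : G ⟶ B, l ≫ q = g ≫ f) : ∃ l : P ⟶ B, l ≫ q = f := by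
  obtain ⟨n, i, p, hip⟩ := mem_addSet_iff.1 hP
  choose l hl using fun j => hf (p j)
  refine ⟨∑ j, i j ≫ l j, ?_⟩
  simp only [Preadditive.sum_comp, Category.assoc, hl]
  simp only [← Category.assoc]
  rw [← Preadditive.sum_comp, hip, Category.id_comp]

theorem map_mem_addSet {E : Type*} [Category* E] [Preadditive E] [HasFiniteBiproducts E]
    (F : D ⥤ E) [F.Additive] (hP : P ∈ addSet D G) : F.obj P ∈ addSet E (F.obj G) := by
  obtain ⟨n, i, p, hip⟩ := mem_addSet_iff.1 hP
  refine mem_addSet_iff.2 ⟨n, fun j => F.map (i j), fun j => F.map (p j), ?_⟩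
  simp only [← F.map_comp]
  rw [← F.map_sum, hip, F.map_id]

theorem op_mem_addSet [HasFiniteBiproducts Dᵒᵖ] (hP : P ∈ addSet D G) :
    Opposite.op P ∈ addSet Dᵒᵖ (Opposite.op G) := by
  obtain ⟨n, i, p, hip⟩ := mem_addSet_iff.1 hP
  refine mem_addSet_iff.2 ⟨n, fun j => (p j).op, fun j => (i j).op, ?_⟩
  simp only [← op_comp]
  rw [← op_sum, hip, op_id]

variable (K : Type*) [Field K] [Linear K D]

theorem exists_biproduct_hom_generating {V : D} (N : Submodule K (G ⟶ V)) [FiniteDimensional K N] :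
    ∃ (n : ℕ) (q : (⨁ fun _ : Fin n => G) ⟶ V),
      (∀ j, biproduct.ι (fun _ => G) j ≫ q ∈ N) ∧ ∀ f ∈ N, ∃ l, l ≫ q = f := by
  let b := Module.finBasis K N
  refine ⟨_, biproduct.desc fun j => (b j : G ⟶ V), fun j => ?_, fun f hf => ?_⟩
  · rw [biproduct.ι_desc]
    exact (b j).2
  · refine ⟨biproduct.lift fun j => b.repr ⟨f, hf⟩ j • 𝟙 G, ?_⟩
    simpa only [biproduct.lift_desc, Linear.smul_comp, Category.id_comp,
      AddSubmonoidClass.coe_finsetSum, Submodule.coe_smul]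
      using congrArg Subtype.val (b.sum_repr ⟨f, hf⟩)

end AddSet

section DualPullback

variable {K : Type*} [Field K] [Linear K D]

/-- The Yoneda map `Hom(W, V) → D Hom(Z, W)` attached to a functional `φ` on `Hom(Z, V)`. -/
noncomputable def dualPullback {W Z V : D} (φ : Module.Dual K (Z ⟶ V)) :
    (W ⟶ V) →ₗ[K] Module.Dual K (Z ⟶ W) :=
  (Linear.comp Z W V).flip.compr₂ φ

@[simp]
theorem dualPullback_apply {W Z V : D} (φ : Module.Dual K (Z ⟶ V)) (f : W ⟶ V) (g : Z ⟶ W) :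
    dualPullback φ f g = φ (g ≫ f) :=
  rfl

theorem dualPullback_dualPullback {W W' Z V : D} (φ : Module.Dual K (Z ⟶ V)) (f : W ⟶ V)
    (h : W' ⟶ W) : dualPullback (dualPullback φ f) h = dualPullback φ (h ≫ f) := by
  ext g
  simp only [dualPullback_apply, Category.assoc]

theorem dualPullback_comp_eq_zero {W W' Z V : D} {φ : Module.Dual K (Z ⟶ V)} {f : W ⟶ V}
    (hf : dualPullback φ f = 0) (h : W' ⟶ W) : dualPullback φ (h ≫ f) = 0 := by
  rw [← dualPullback_dualPullback, hf]
  rfl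

theorem exists_dualPullback_eq {A B E Z : D} {f : A ⟶ B} {g : B ⟶ E}
    (hfg : IsWeakKernelCokernelPair f g) {φ : Module.Dual K (Z ⟶ B)} (hφ : dualPullback φ f = 0) :
    ∃ ψ : Module.Dual K (Z ⟶ E), dualPullback ψ g = φ := by
  have hφ_range : φ ∈ LinearMap.range (Linear.rightComp K Z g).dualMap := by
    rw [LinearMap.range_dualMap_eq_dualAnnihilator_ker, Submodule.mem_dualAnnihilator]
    intro w hw
    obtain ⟨l, rfl⟩ := hfg.exists_lift w hw
    exact LinearMap.congr_fun hφ l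
  exact hφ_range

/-- The subfunctor `Ker (Hom(-, V) → D Hom(Z, -))` cut out by `φ` is generated by `y`. -/
def GeneratesKer {Z V Y : D} (φ : Module.Dual K (Z ⟶ V)) (y : Y ⟶ V) : Prop :=
  ∀ ⦃W : D⦄ (f : W ⟶ V), (∃ l, l ≫ y = f) ↔ dualPullback φ f = 0

theorem exists_generatesKer_dualPullback [HasWeakKernelCokernelPairs D] {Z V V' Y : D}
    {φ : Module.Dual K (Z ⟶ V')} {y : Y ⟶ V'} (hy : GeneratesKer φ y) (s : V ⟶ V') :
    ∃ (Y' : D) (y' : Y' ⟶ V), GeneratesKer (dualPullback φ s) y' := by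
  obtain ⟨Y', y', hy'⟩ := exists_weakPullback y s
  exact ⟨Y', y', fun W f => by rw [hy', hy, dualPullback_dualPullback]⟩

variable [HasFiniteBiproducts D]

theorem exists_hom_generating_ker_on_addSet {Z V : D} (φ : Module.Dual K (Z ⟶ V)) (G : D)
    [FiniteDimensional K (G ⟶ V)] :
    ∃ (B : D) (q : B ⟶ V), dualPullback φ q = 0 ∧
      ∀ ⦃P : D⦄, P ∈ addSet D G → ∀ f : P ⟶ V, dualPullback φ f = 0 → ∃ l, l ≫ q = f := by
  obtain ⟨n, q, hq, hker⟩ := exists_biproduct_hom_generating K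
    (LinearMap.ker (dualPullback (W := G) φ))
  refine ⟨_, q, ?_, fun P hP f hf => exists_lift_of_mem_addSet hP fun g =>
    hker _ (dualPullback_comp_eq_zero hf g)⟩
  rw [← Category.id_comp q, ← biproduct.total, Preadditive.sum_comp, map_sum]
  refine Finset.sum_eq_zero fun j _ => ?_
  rw [Category.assoc]
  exact dualPullback_comp_eq_zero (hq j) _

theorem dualPullback_surjective_of_mem_addSet {Z V G Q : D} {φ : Module.Dual K (Z ⟶ V)}
    (hφ : Function.Surjective (dualPullback (W := G) φ)) (hQ : Q ∈ addSet D G) :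
    Function.Surjective (dualPullback (W := Q) φ) := by
  intro θ
  obtain ⟨n, i, p, hip⟩ := mem_addSet_iff.1 hQ
  choose a ha using fun j => hφ (dualPullback θ (p j))
  refine ⟨∑ j, i j ≫ a j, ?_⟩
  calc dualPullback φ (∑ j, i j ≫ a j)
      = ∑ j, dualPullback θ (i j ≫ p j) := by
        simp only [map_sum, ← dualPullback_dualPullback, ha]
    _ = θ := by
        rw [← map_sum, hip]
        ext g
        rw [dualPullback_apply, Category.comp_id]

theorem exists_dualPullback_surjective (K : Type*) [Field K] [Linear K D] (Z G : D)
    [FiniteDimensional K (Z ⟶ G)] :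
    ∃ (V : D) (φ : Module.Dual K (Z ⟶ V)), Function.Surjective (dualPullback (W := G) φ) := by
  let b := Module.finBasis K (Module.Dual K (Z ⟶ G))
  refine ⟨⨁ fun _ => G, ∑ j, dualPullback (b j) (biproduct.π _ j), fun θ =>
    ⟨biproduct.lift fun j => b.repr θ j • 𝟙 G, ?_⟩⟩
  ext g
  refine Eq.trans ?_ (LinearMap.congr_fun (b.sum_repr θ) g)
  simp [LinearMap.sum_apply, -Module.Basis.sum_repr]

theorem exists_dualPullback_eq_and_surjective {Z V : D} (φ : Module.Dual K (Z ⟶ V)) (G : D)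
    [FiniteDimensional K (Z ⟶ G)] :
    ∃ (V' : D) (s : V ⟶ V') (φ' : Module.Dual K (Z ⟶ V')), dualPullback φ' s = φ ∧
      Function.Surjective (dualPullback (W := G) φ') := by
  have := hasBinaryBiproducts_of_finite_biproducts D
  obtain ⟨V₂, φ₂, hφ₂⟩ := exists_dualPullback_surjective K Z G
  refine ⟨V ⊞ V₂, biprod.inl, dualPullback φ biprod.fst + dualPullback φ₂ biprod.snd, ?_,
    fun θ => ?_⟩
  · ext g
    simp
  · obtain ⟨a, rfl⟩ := hφ₂ θ
    refine ⟨a ≫ biprod.inr, ?_⟩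
    ext g
    simp

end DualPullback

section Opposite

theorem hasFiniteBiproducts_op [HasFiniteBiproducts D] : HasFiniteBiproducts Dᵒᵖ :=
  HasFiniteBiproducts.of_hasFiniteProducts

/-- The linear structure on `Dᵒᵖ` with the scalar action of `D`. -/
@[reducible]
noncomputable def linearOpposite (K : Type*) [Field K] [Linear K D] : Linear K Dᵒᵖ where
  homModule X Y := Equiv.module K (opEquiv X Y)
  smul_comp _ _ _ r f g := Quiver.Hom.unop_inj (Linear.comp_smul _ _ _ g.unop r f.unop)
  comp_smul _ _ _ f r g := Quiver.Hom.unop_inj (Linear.smul_comp _ _ _ r g.unop f.unop)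

theorem finiteDimensional_hom_op (K : Type*) [Field K] [Linear K D]
    [∀ X Y : D, FiniteDimensional K (X ⟶ Y)] (X Y : Dᵒᵖ) :
    letI := linearOpposite (D := D) K; FiniteDimensional K (X ⟶ Y) :=
  letI := linearOpposite (D := D) K
  Module.Finite.equiv ((opEquiv X Y).linearEquiv K).symm

theorem isLocalRing_end_op (X : D) [IsLocalRing (End X)] : IsLocalRing (End (Opposite.op X)) := by
  have isUnit_of_unop (e : End (Opposite.op X)) (he : IsUnit (M := End X) e.unop) : IsUnit e :=
    (isUnit_iff_isIso e).2 ((isIso_unop_iff e).1 ((isUnit_iff_isIso _).1 he))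
  have : Nontrivial (End (Opposite.op X)) :=
    ⟨𝟙 _, 0, fun h => one_ne_zero (α := End X) (congrArg Quiver.Hom.unop h)⟩
  refine IsLocalRing.of_isUnit_or_isUnit_one_sub_self fun e => ?_
  exact (IsLocalRing.isUnit_or_isUnit_of_add_one (R := End X) (a := e.unop) (b := 𝟙 X - e.unop)
    (add_sub_cancel _ _)).imp (isUnit_of_unop e) (isUnit_of_unop (1 - e))

end Opposite

section AlmostSplitMorphisms

variable [HasFiniteBiproducts D]

variable (G₁ G₂ : D) in
/-- `W` sits in a sequence `P ⟶ W ⟶ Q ⟶ R` of weak kernel-cokernel pairs with `P ∈ add G₁` and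
`Q, R ∈ add G₂`. -/
def IsResolvedBy (W : D) : Prop :=
  ∃ (P Q R : D) (a : P ⟶ W) (b : W ⟶ Q) (c : Q ⟶ R),
    IsWeakKernelCokernelPair a b ∧ IsWeakKernelCokernelPair b c ∧
      P ∈ addSet D G₁ ∧ Q ∈ addSet D G₂ ∧ R ∈ addSet D G₂

variable (G₁ G₂ : D) in
/-- The notion dual to `IsResolvedBy`: a sequence `R ⟶ Q ⟶ W ⟶ P` with `P ∈ add G₁` and
`Q, R ∈ add G₂`. -/
def IsCoresolvedBy (W : D) : Prop :=
  ∃ (R Q P : D) (c : R ⟶ Q) (b : Q ⟶ W) (a : W ⟶ P),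
    IsWeakKernelCokernelPair c b ∧ IsWeakKernelCokernelPair b a ∧
      P ∈ addSet D G₁ ∧ Q ∈ addSet D G₂ ∧ R ∈ addSet D G₂

variable {G₁ G₂ : D}

section Kernel

variable {K : Type*} [Field K] [Linear K D]

theorem exists_lift_of_isResolvedBy {Z V Y₀ U B W : D} {φ : Module.Dual K (Z ⟶ V)}
    (hφ : Function.Surjective (dualPullback (W := G₂) φ))
    {y₀ : Y₀ ⟶ V} {u : V ⟶ U} (hu : IsWeakKernelCokernelPair y₀ u)
    (hy₀ : ∀ ⦃P : D⦄, P ∈ addSet D G₁ → ∀ f : P ⟶ V, dualPullback φ f = 0 → ∃ l, l ≫ y₀ = f)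
    {ψ : Module.Dual K (Z ⟶ U)} (hψ : dualPullback ψ u = φ) {q : B ⟶ U}
    (hq : ∀ ⦃Q : D⦄, Q ∈ addSet D G₂ → ∀ f : Q ⟶ U, dualPullback ψ f = 0 → ∃ l, l ≫ q = f)
    (hW : IsResolvedBy G₁ G₂ W) {f : W ⟶ V} (hf : dualPullback φ f = 0) :
    ∃ l, l ≫ q = f ≫ u := by
  obtain ⟨P, Q, R, a, b, c, hab, hbc, hP, hQ, hR⟩ := hW
  obtain ⟨l₀, hl₀⟩ := hy₀ hP (a ≫ f) (dualPullback_comp_eq_zero hf a)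
  obtain ⟨d, hd⟩ : ∃ d, b ≫ d = f ≫ u :=
    hab.exists_desc _ (by rw [← Category.assoc, ← hl₀, Category.assoc, hu.zero, comp_zero])
  -- `d` itself need not lift along `q`; it does after subtracting a morphism through `c`, which
  -- is invisible on `W`.
  obtain ⟨θ, hθ⟩ : ∃ θ, dualPullback θ c = dualPullback ψ d :=
    exists_dualPullback_eq hbc
      (by rw [dualPullback_dualPullback, hd, ← dualPullback_dualPullback, hψ, hf])
  obtain ⟨a', rfl⟩ := dualPullback_surjective_of_mem_addSet hφ hR θ
  obtain ⟨e, he⟩ : ∃ e, e ≫ q = d - c ≫ a' ≫ u := by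
    refine hq hQ _ ?_
    rw [map_sub, ← hθ, ← hψ]
    simp only [dualPullback_dualPullback, sub_self]
  refine ⟨b ≫ e, ?_⟩
  rw [Category.assoc, he, Preadditive.comp_sub, hd, ← Category.assoc b c, hbc.zero, zero_comp,
    sub_zero]

variable [HasWeakKernelCokernelPairs D] [∀ X Y : D, FiniteDimensional K (X ⟶ Y)]
  (hD : ∀ W : D, IsResolvedBy G₁ G₂ W)
include hD

theorem exists_generatesKer_of_surjective {Z V : D} {φ : Module.Dual K (Z ⟶ V)}
    (hφ : Function.Surjective (dualPullback (W := G₂) φ)) :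
    ∃ (Y : D) (y : Y ⟶ V), GeneratesKer φ y := by
  obtain ⟨Y₀, y₀, hφy₀, hy₀⟩ := exists_hom_generating_ker_on_addSet φ G₁
  obtain ⟨U, u, hu⟩ := HasWeakKernelCokernelPairs.exists_cokernel y₀
  obtain ⟨ψ, hψ⟩ := exists_dualPullback_eq hu hφy₀
  obtain ⟨B, q, hψq, hq⟩ := exists_hom_generating_ker_on_addSet ψ G₂
  obtain ⟨Y, y, hy⟩ := exists_weakPullback q u
  refine ⟨Y, y, fun W f => (hy f).trans ⟨?_, ?_⟩⟩
  · rintro ⟨l, hl⟩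
    rw [← hψ, dualPullback_dualPullback, ← hl]
    exact dualPullback_comp_eq_zero hψq l
  · exact exists_lift_of_isResolvedBy hφ hu hy₀ hψ hq (hD W)

theorem exists_generatesKer {Z V : D} (φ : Module.Dual K (Z ⟶ V)) :
    ∃ (Y : D) (y : Y ⟶ V), GeneratesKer φ y := by
  obtain ⟨V', s, φ', rfl, hφ'⟩ := exists_dualPullback_eq_and_surjective φ G₂
  obtain ⟨Y', y', hy'⟩ := exists_generatesKer_of_surjective hD hφ'
  exact exists_generatesKer_dualPullback hy' s

end Kernel

theorem exists_dual_vanishing_on_nonunits (K A : Type*) [Field K] [Ring A] [Algebra K A]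
    [IsLocalRing A] : ∃ φ : Module.Dual K A, φ 1 ≠ 0 ∧ ∀ a ∈ nonunits A, φ a = 0 := by
  let N : Submodule K A :=
    { carrier := nonunits A
      add_mem' := fun ha hb => IsLocalRing.nonunits_add ha hb
      zero_mem' := not_isUnit_zero
      smul_mem' := fun c a ha hca => by
        rcases eq_or_ne c 0 with rfl | hc
        · exact not_isUnit_zero (zero_smul K a ▸ hca)
        · exact ha ((isUnit_smul_iff (Units.mk0 c hc) a).1 hca) }
  exact Submodule.exists_le_ker_of_notMem (p := N) (v := 1) fun h => h isUnit_one

theorem exists_rightAlmostSplit [HasWeakKernelCokernelPairs D]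
    (K : Type*) [Field K] [Linear K D] [∀ X Y : D, FiniteDimensional K (X ⟶ Y)]
    (hD : ∀ W : D, IsResolvedBy G₁ G₂ W)
    (Z : D) [IsLocalRing (End Z)] :
    ∃ (Y : D) (y : Y ⟶ Z), RightAlmostSplit D y ∧ ¬ ∃ s, s ≫ y = 𝟙 Z := by
  obtain ⟨φ, hφ_one, hφ⟩ := exists_dual_vanishing_on_nonunits K (End Z)
  obtain ⟨Y, y, hy⟩ := exists_generatesKer hD (Z := Z) (V := Z) φ
  refine ⟨Y, y, fun W f hf => (hy f).2 ?_, ?_⟩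
  · ext g
    refine hφ _ fun hu : IsUnit (M := End Z) (g ≫ f) => hf ?_
    obtain ⟨w, hw⟩ := hu.exists_right_inv
    exact ⟨(show Z ⟶ Z from w) ≫ g, (Category.assoc _ _ _).trans hw⟩
  · rintro ⟨s, hs⟩
    have hsy := LinearMap.congr_fun ((hy y).1 ⟨𝟙 Y, Category.id_comp y⟩) s
    rw [dualPullback_apply, hs] at hsy
    exact hφ_one hsy

theorem IsCoresolvedBy.op [HasFiniteBiproducts Dᵒᵖ] {W : D}
    (h : IsCoresolvedBy G₁ G₂ W) :
    IsResolvedBy (Opposite.op G₁) (Opposite.op G₂) (Opposite.op W) := by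
  obtain ⟨R, Q, P, c, b, a, hcb, hba, hP, hQ, hR⟩ := h
  exact ⟨_, _, _, a.op, b.op, c.op, hba.op, hcb.op, op_mem_addSet hP, op_mem_addSet hQ,
    op_mem_addSet hR⟩

theorem exists_leftAlmostSplit [HasWeakKernelCokernelPairs D]
    (K : Type*) [Field K] [Linear K D] [∀ X Y : D, FiniteDimensional K (X ⟶ Y)]
    (hD : ∀ W : D, IsCoresolvedBy G₁ G₂ W) (X : D) [IsLocalRing (End X)] :
    ∃ (Y : D) (x : X ⟶ Y), LeftAlmostSplit D x ∧ ¬ ∃ r, x ≫ r = 𝟙 X := by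
  let _ := linearOpposite (D := D) K
  have := finiteDimensional_hom_op (D := D) K
  have := hasFiniteBiproducts_op (D := D)
  have := isLocalRing_end_op X
  obtain ⟨Y, y, hy, hsplit⟩ :=
    exists_rightAlmostSplit K (fun W : Dᵒᵖ => (hD W.unop).op) (Opposite.op X)
  refine ⟨Y.unop, y.unop, fun M a ha => ?_, ?_⟩
  · obtain ⟨n, hn⟩ := hy a.op fun ⟨s, hs⟩ => ha ⟨s.unop, Quiver.Hom.op_inj hs⟩
    exact ⟨n.unop, Quiver.Hom.op_inj hn⟩
  · rintro ⟨r, hr⟩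
    exact hsplit ⟨r.op, Quiver.Hom.unop_inj hr⟩

end AlmostSplitMorphisms

section LocalEndomorphismRings

theorem isIso_or_isIso_id_sub {X : D} [IsLocalRing (End X)] (e : X ⟶ X) :
    IsIso e ∨ IsIso (𝟙 X - e) := by
  simpa only [isUnit_iff_isIso] using
    IsLocalRing.isUnit_or_isUnit_of_add_one (R := End X) (add_sub_cancel e (𝟙 X))

theorem isIso_of_comp_eq_self {Z S : D} [IsLocalRing (End Z)] {δ : Z ⟶ S} (hδ : δ ≠ 0)
    {e : Z ⟶ Z} (he : e ≫ δ = δ) : IsIso e := by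
  refine (isIso_or_isIso_id_sub e).resolve_right fun _ => hδ ?_
  rw [← cancel_epi (𝟙 Z - e), Preadditive.sub_comp, Category.id_comp, he, sub_self, comp_zero]

theorem isIso_of_comp_map_eq_self {E : Type*} [Category* E] [Preadditive E] (F : D ⥤ E)
    [F.Additive] {Z : E} {X : D} [IsLocalRing (End X)] {δ : Z ⟶ F.obj X} (hδ : δ ≠ 0)
    {e : X ⟶ X} (he : δ ≫ F.map e = δ) : IsIso e := by
  refine (isIso_or_isIso_id_sub e).resolve_right fun _ => hδ ?_
  rw [← cancel_mono (F.map (𝟙 X - e)), F.map_sub, F.map_id, Preadditive.comp_sub,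
    Category.comp_id, he, sub_self, zero_comp]

theorem isLocalRing_end_of_iso {X Y : D} (e : X ≅ Y) [IsLocalRing (End Y)] :
    IsLocalRing (End X) := by
  let φ : End X →+* End Y := RingHom.mk' e.conj.toMonoidHom fun a b =>
    (congrArg (e.inv ≫ ·) (Preadditive.add_comp _ _ _ a b e.hom)).trans
      (Preadditive.comp_add _ _ _ e.inv (a ≫ e.hom) (b ≫ e.hom))
  have : IsLocalHom φ := ⟨fun a ha => (MulEquiv.isUnit_map e.conj).1 ha⟩
  exact RingHom.domain_isLocalRing φ

namespace KrullSchmidt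

variable [HasFiniteBiproducts D] (hKS : KrullSchmidt D)
include hKS

theorem exists_sum_eq_id (X : D) :
    ∃ (n : ℕ) (U : Fin n → D) (p : ∀ j, X ⟶ U j) (i : ∀ j, U j ⟶ X),
      (∀ j, IsLocalRing (End (U j))) ∧ (∀ j, i j ≫ p j = 𝟙 (U j)) ∧ ∑ j, p j ≫ i j = 𝟙 X := by
  obtain ⟨n, U, e, hU⟩ := hKS X
  refine ⟨n, U, fun j => e.hom ≫ biproduct.π U j, fun j => biproduct.ι U j ≫ e.inv, hU,
    fun j => by simp, ?_⟩
  calc ∑ j, (e.hom ≫ biproduct.π U j) ≫ biproduct.ι U j ≫ e.inv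
      = e.hom ≫ (∑ j, biproduct.π U j ≫ biproduct.ι U j) ≫ e.inv := by
        simp only [Preadditive.sum_comp, Preadditive.comp_sum, Category.assoc]
    _ = 𝟙 X := by rw [biproduct.total, Category.id_comp, e.hom_inv_id]

theorem exists_comp_map_ne_zero {E : Type*} [Category* E] [Preadditive E] (F : D ⥤ E)
    [F.Additive] {Z : E} {X : D} {d : Z ⟶ F.obj X} (hd : d ≠ 0) :
    ∃ (U : D) (p : X ⟶ U), IsLocalRing (End U) ∧ d ≫ F.map p ≠ 0 := by
  obtain ⟨n, U, p, i, hU, -, hsum⟩ := hKS.exists_sum_eq_id X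
  by_contra! hzero
  refine hd ?_
  rw [← Category.comp_id d, ← F.map_id, ← hsum, F.map_sum, Preadditive.comp_sum]
  refine Finset.sum_eq_zero fun j _ => ?_
  rw [F.map_comp, ← Category.assoc, hzero (U j) (p j) (hU j), zero_comp]

theorem exists_comp_ne_zero {X S : D} {d : X ⟶ S} (hd : d ≠ 0) :
    ∃ (U : D) (i : U ⟶ X), IsLocalRing (End U) ∧ i ≫ d ≠ 0 := by
  obtain ⟨n, U, p, i, hU, -, hsum⟩ := hKS.exists_sum_eq_id X
  by_contra! hzero
  refine hd ?_
  rw [← Category.id_comp d, ← hsum, Preadditive.sum_comp]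
  refine Finset.sum_eq_zero fun j _ => ?_
  rw [Category.assoc, hzero (U j) (i j) (hU j), comp_zero]

theorem exists_local_retract {X : D} (hX : ¬ IsZero X) :
    ∃ (U : D) (i : U ⟶ X) (p : X ⟶ U), IsLocalRing (End U) ∧ i ≫ p = 𝟙 U := by
  obtain ⟨n, U, p, i, hU, hip, hsum⟩ := hKS.exists_sum_eq_id X
  rcases isEmpty_or_nonempty (Fin n) with _ | ⟨⟨j⟩⟩
  · rw [Finset.univ_eq_empty, Finset.sum_empty] at hsum
    exact absurd ((IsZero.iff_id_eq_zero X).2 hsum.symm) hX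
  · exact ⟨U j, i j, p j, hU j, hip j⟩

end KrullSchmidt

end LocalEndomorphismRings

end Preadditive

theorem forall_map_hom_eq_zero_iff {D E : Type*} [Category* D] [Category* E]
    [HasZeroMorphisms D] [HasZeroMorphisms E] (F : D ⥤ E) [F.PreservesZeroMorphisms] [F.Full]
    [F.Faithful] {A B : D} :
    (∀ f : F.obj A ⟶ F.obj B, f = 0) ↔ ∀ f : A ⟶ B, f = 0 := by
  refine ⟨fun h f => F.map_injective (by rw [h (F.map f), F.map_zero]), fun h f => ?_⟩
  obtain ⟨g, rfl⟩ := F.map_surjective f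
  rw [h g, F.map_zero]

namespace ClusterTilting

variable {D : Type*} [Category* D] [Preadditive D] [HasShift D ℤ] [HasFiniteBiproducts D]
  {T : D} (hT : ClusterTilting D T)
include hT

theorem shift_neg_one_mem_iff {X : D} :
    X⟦(-1 : ℤ)⟧ ∈ addSet D T ↔ ∀ f : T ⟶ X, f = 0 := by
  rw [(hT _).1]
  let e : X⟦(-1 : ℤ)⟧⟦(1 : ℤ)⟧ ≅ X := shiftNegShift X (1 : ℤ)
  refine ⟨fun h f => ?_, fun h f => ?_⟩
  · rw [← cancel_mono e.inv, h (f ≫ e.inv), zero_comp]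
  · rw [← cancel_mono e.hom, h (f ≫ e.hom), zero_comp]

theorem shift_one_mem_iff [(shiftFunctor D (1 : ℤ)).PreservesZeroMorphisms] {Z : D} :
    Z⟦(1 : ℤ)⟧ ∈ addSet D T ↔ ∀ f : Z ⟶ T, f = 0 :=
  (hT _).2.trans (forall_map_hom_eq_zero_iff (shiftFunctor D (1 : ℤ)))

end ClusterTilting

section Pretriangulated

variable {D : Type*} [Category* D] [Preadditive D] [HasZeroObject D] [HasShift D ℤ]
  [∀ n : ℤ, (shiftFunctor D n).Additive] [Pretriangulated D]

section Triangle

variable {A B E : D} {f : A ⟶ B} {g : B ⟶ E} {h : E ⟶ A⟦(1 : ℤ)⟧}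
  (H : Triangle.mk f g h ∈ distTriang D)
include H

theorem isWeakKernelCokernelPair_mor₁_mor₂ : IsWeakKernelCokernelPair f g where
  zero := comp_distTriang_mor_zero₁₂ _ H
  exists_lift _ t ht := (Triangle.coyoneda_exact₂ _ H t ht).imp fun _ => Eq.symm
  exists_desc _ t ht := (Triangle.yoneda_exact₂ _ H t ht).imp fun _ => Eq.symm

theorem isWeakKernelCokernelPair_mor₂_mor₃ : IsWeakKernelCokernelPair g h :=
  isWeakKernelCokernelPair_mor₁_mor₂ (rot_of_distTriang _ H)

theorem isWeakKernelCokernelPair_mor₃_map_mor₁ : IsWeakKernelCokernelPair h (f⟦(1 : ℤ)⟧') := by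
  have hneg : IsWeakKernelCokernelPair h (-f⟦(1 : ℤ)⟧') :=
    isWeakKernelCokernelPair_mor₂_mor₃ (rot_of_distTriang _ H)
  refine ⟨by simpa using hneg.zero, fun W t ht => hneg.exists_lift t (by simpa using ht),
    fun W t ht => ?_⟩
  obtain ⟨l, hl⟩ := hneg.exists_desc t ht
  exact ⟨-l, by simpa using hl⟩

theorem exists_mor₁_comp_eq {M : D} {a : A ⟶ M} (ha : h ≫ a⟦(1 : ℤ)⟧' = 0) :
    ∃ m : B ⟶ M, f ≫ m = a := by
  obtain ⟨l, hl⟩ := (isWeakKernelCokernelPair_mor₃_map_mor₁ H).exists_desc _ ha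
  obtain ⟨m, rfl⟩ := (shiftFunctor D (1 : ℤ)).map_surjective l
  exact ⟨m, (shiftFunctor D (1 : ℤ)).map_injective (by rw [Functor.map_comp, hl])⟩

end Triangle

instance hasWeakKernelCokernelPairs_of_pretriangulated : HasWeakKernelCokernelPairs D where
  exists_cokernel _ _ f :=
    let ⟨_, _, _, H⟩ := distinguished_cocone_triangle f
    ⟨_, _, isWeakKernelCokernelPair_mor₁_mor₂ H⟩
  exists_kernel _ _ g :=
    let ⟨_, _, _, H⟩ := distinguished_cocone_triangle₁ g
    ⟨_, _, isWeakKernelCokernelPair_mor₁_mor₂ H⟩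

namespace Indecomposable

theorem isIso_of_retract {X U : D} (hX : Indecomposable D X) (hU : ¬ IsZero U)
    {i : U ⟶ X} {p : X ⟶ U} (hip : i ≫ p = 𝟙 U) : IsIso i := by
  obtain ⟨W, g, w, H⟩ := distinguished_cocone_triangle i
  have : IsSplitMono i := ⟨⟨⟨p, hip⟩⟩⟩
  obtain ⟨e, -⟩ := exists_iso_binaryBiproduct_of_distTriang _ H
    (Triangle.mor₃_eq_zero_of_mono₁ _ H (inferInstanceAs (Mono i)))
  exact (Triangle.isZero₃_iff_isIso₁ _ H).1 ((hX.2 U W e).resolve_left hU)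

theorem isLocalRing_end [HasFiniteBiproducts D] (hKS : KrullSchmidt D) {X : D}
    (hX : Indecomposable D X) : IsLocalRing (End X) := by
  obtain ⟨U, i, p, hU, hip⟩ := hKS.exists_local_retract hX.1
  have : IsIso i := isIso_of_retract hX
    (fun h => one_ne_zero (α := End U) (h.eq_of_src _ _)) hip
  exact isLocalRing_end_of_iso (asIso i).symm

end Indecomposable

section AlmostSplitTriangle

variable {X Y Z : D} {x : X ⟶ Y} {y : Y ⟶ Z} {δ : Z ⟶ X⟦(1 : ℤ)⟧}

theorem exists_comp_eq_of_leftAlmostSplit (H : Triangle.mk x y δ ∈ distTriang D)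
    (hx : LeftAlmostSplit D x) {W : D} {h : W ⟶ X⟦(1 : ℤ)⟧} (hh : h ≠ 0) :
    ∃ g : Z ⟶ W, g ≫ h = δ := by
  obtain ⟨E, a, b, HE⟩ := distinguished_cocone_triangle₂ h
  have pair := isWeakKernelCokernelPair_mor₃_map_mor₁ HE
  obtain ⟨m, hm⟩ : ∃ m, x ≫ m = a := by
    refine hx a fun ⟨r, hr⟩ => hh ?_
    rw [← Category.comp_id h, ← CategoryTheory.Functor.map_id, ← hr, Functor.map_comp,
      ← Category.assoc, pair.zero, zero_comp]
  refine pair.exists_lift δ ?_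
  rw [← hm, Functor.map_comp, ← Category.assoc, (isWeakKernelCokernelPair_mor₃_map_mor₁ H).zero,
    zero_comp]

theorem exists_comp_eq_of_rightAlmostSplit (H : Triangle.mk x y δ ∈ distTriang D)
    (hy : RightAlmostSplit D y) {W : D} {h : Z ⟶ W} (hh : h ≠ 0) :
    ∃ g : W ⟶ X⟦(1 : ℤ)⟧, h ≫ g = δ := by
  obtain ⟨E, a, pair⟩ := HasWeakKernelCokernelPairs.exists_kernel h
  obtain ⟨m, hm⟩ : ∃ m, m ≫ y = a := by
    refine hy a fun ⟨s, hs⟩ => hh ?_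
    rw [← Category.id_comp h, ← hs, Category.assoc, pair.zero, comp_zero]
  refine pair.exists_desc δ ?_
  rw [← hm, Category.assoc, (isWeakKernelCokernelPair_mor₂_mor₃ H).zero, comp_zero]

theorem exists_isAlmostSplitTriangle_of_right [IsLocalRing (End X)] (hδ : δ ≠ 0)
    (h : ∀ ⦃W : D⦄ (f : W ⟶ Z), (¬ ∃ s, s ≫ f = 𝟙 Z) → f ≫ δ = 0) :
    ∃ (Y : D) (x : X ⟶ Y) (y : Y ⟶ Z), IsAlmostSplitTriangle D x y δ := by
  obtain ⟨Y, x, y, H⟩ := distinguished_cocone_triangle₂ δ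
  have hy : RightAlmostSplit D y := fun W f hf =>
    (isWeakKernelCokernelPair_mor₂_mor₃ H).exists_lift f (h f hf)
  refine ⟨Y, x, y, H, hδ, fun M a ha => exists_mor₁_comp_eq H ?_, hy⟩
  by_contra hδa
  obtain ⟨g, hg⟩ := exists_comp_eq_of_rightAlmostSplit H hy hδa
  obtain ⟨b, rfl⟩ := (shiftFunctor D (1 : ℤ)).map_surjective g
  have : IsIso (a ≫ b) := isIso_of_comp_map_eq_self (shiftFunctor D (1 : ℤ)) hδ
    (by rw [Functor.map_comp, ← Category.assoc, hg])
  exact ha ⟨b ≫ inv (a ≫ b), by rw [← Category.assoc, IsIso.hom_inv_id]⟩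

theorem exists_isAlmostSplitTriangle_of_left [IsLocalRing (End Z)] (hδ : δ ≠ 0)
    (h : ∀ ⦃W : D⦄ (f : X ⟶ W), (¬ ∃ r, f ≫ r = 𝟙 X) → δ ≫ f⟦(1 : ℤ)⟧' = 0) :
    ∃ (Y : D) (x : X ⟶ Y) (y : Y ⟶ Z), IsAlmostSplitTriangle D x y δ := by
  obtain ⟨Y, x, y, H⟩ := distinguished_cocone_triangle₂ δ
  have hx : LeftAlmostSplit D x := fun W f hf => exists_mor₁_comp_eq H (h f hf)
  refine ⟨Y, x, y, H, hδ, hx, fun N c hc =>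
    (isWeakKernelCokernelPair_mor₂_mor₃ H).exists_lift c ?_⟩
  by_contra hcδ
  obtain ⟨g, hg⟩ := exists_comp_eq_of_leftAlmostSplit H hx hcδ
  have : IsIso (g ≫ c) := isIso_of_comp_eq_self hδ (by rw [Category.assoc, hg])
  exact hc ⟨inv (g ≫ c) ≫ g, by rw [Category.assoc, IsIso.inv_hom_id]⟩

theorem IsAlmostSplitTriangle.hom_eq_zero_iff (h : IsAlmostSplitTriangle D x y δ) (W : D) :
    (∀ f : Z ⟶ W, f = 0) ↔ ∀ g : W ⟶ X⟦(1 : ℤ)⟧, g = 0 := by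
  obtain ⟨H, hδ, hx, hy⟩ := h
  constructor <;> intro hzero f <;> by_contra hf
  · obtain ⟨g, hg⟩ := exists_comp_eq_of_leftAlmostSplit H hx hf
    exact hδ (by rw [← hg, hzero g, zero_comp])
  · obtain ⟨g, hg⟩ := exists_comp_eq_of_rightAlmostSplit H hy hf
    exact hδ (by rw [← hg, hzero g, comp_zero])

end AlmostSplitTriangle

variable [HasFiniteBiproducts D]

/-- Every object is the cone of a morphism of `add G`, that is, `D = add G * (add G)[1]`. -/
def IsTwoTermGenerator (G : D) : Prop :=
  ∀ W : D, ∃ (P₁ P₀ : D) (f : P₁ ⟶ P₀) (g : P₀ ⟶ W) (h : W ⟶ P₁⟦(1 : ℤ)⟧),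
    Triangle.mk f g h ∈ distTriang D ∧ P₁ ∈ addSet D G ∧ P₀ ∈ addSet D G

namespace IsTwoTermGenerator

variable {G : D} (hG : IsTwoTermGenerator G)
include hG

theorem isResolvedBy (W : D) : IsResolvedBy G (G⟦(1 : ℤ)⟧) W := by
  obtain ⟨P₁, P₀, f, g, h, H, hP₁, hP₀⟩ := hG W
  exact ⟨_, _, _, g, h, f⟦(1 : ℤ)⟧', isWeakKernelCokernelPair_mor₂_mor₃ H,
    isWeakKernelCokernelPair_mor₃_map_mor₁ H, hP₀, map_mem_addSet _ hP₁, map_mem_addSet _ hP₀⟩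

theorem isCoresolvedBy (W : D) : IsCoresolvedBy (G⟦(1 : ℤ)⟧) G W := by
  obtain ⟨P₁, P₀, f, g, h, H, hP₁, hP₀⟩ := hG W
  exact ⟨_, _, _, f, g, h, isWeakKernelCokernelPair_mor₁_mor₂ H,
    isWeakKernelCokernelPair_mor₂_mor₃ H, map_mem_addSet _ hP₁, hP₀, hP₁⟩

variable (K : Type*) [Field K] [Linear K D] [∀ X Y : D, FiniteDimensional K (X ⟶ Y)]
  (hKS : KrullSchmidt D)
include K hKS

theorem exists_isAlmostSplitTriangle_to (Z : D) [IsLocalRing (End Z)] :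
    ∃ (X Y : D) (x : X ⟶ Y) (y : Y ⟶ Z) (δ : Z ⟶ X⟦(1 : ℤ)⟧), IsAlmostSplitTriangle D x y δ := by
  obtain ⟨Y₀, y₀, hy₀, hsplit⟩ := exists_rightAlmostSplit K hG.isResolvedBy Z
  obtain ⟨X₀, x₀, d, H⟩ := distinguished_cocone_triangle₁ y₀
  have pair := isWeakKernelCokernelPair_mor₂_mor₃ H
  have hd : d ≠ 0 := by
    rintro rfl
    exact hsplit (pair.exists_lift (𝟙 Z) comp_zero)
  obtain ⟨X, p, _, hdp⟩ := hKS.exists_comp_map_ne_zero (shiftFunctor D (1 : ℤ)) hd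
  obtain ⟨Y, x, y, h⟩ := exists_isAlmostSplitTriangle_of_right hdp fun W f hf => by
    obtain ⟨n, rfl⟩ := hy₀ f hf
    rw [Category.assoc, ← Category.assoc y₀, pair.zero, zero_comp, comp_zero]
  exact ⟨X, Y, x, y, _, h⟩

theorem exists_isAlmostSplitTriangle_from (X : D) [IsLocalRing (End X)] :
    ∃ (Y Z : D) (x : X ⟶ Y) (y : Y ⟶ Z) (δ : Z ⟶ X⟦(1 : ℤ)⟧), IsAlmostSplitTriangle D x y δ := by
  obtain ⟨Y₀, x₀, hx₀, hsplit⟩ := exists_leftAlmostSplit K hG.isCoresolvedBy X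
  obtain ⟨Z₀, y₀, d, H⟩ := distinguished_cocone_triangle x₀
  have hd : d ≠ 0 := by
    rintro rfl
    exact hsplit (exists_mor₁_comp_eq H zero_comp)
  obtain ⟨Z, i, _, hid⟩ := hKS.exists_comp_ne_zero hd
  obtain ⟨Y, x, y, h⟩ := exists_isAlmostSplitTriangle_of_left hid fun W f hf => by
    obtain ⟨m, rfl⟩ := hx₀ f hf
    rw [Functor.map_comp, Category.assoc, ← Category.assoc d,
      (isWeakKernelCokernelPair_mor₃_map_mor₁ H).zero, zero_comp, comp_zero]
  exact ⟨Y, Z, x, y, _, h⟩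

end IsTwoTermGenerator

namespace ClusterTilting

variable {T : D} (hT : ClusterTilting D T)
include hT

theorem isTwoTermGenerator (K : Type*) [Field K] [Linear K D]
    [∀ X : D, FiniteDimensional K (T ⟶ X)] : IsTwoTermGenerator T := by
  intro W
  obtain ⟨n, g, -, hg⟩ := exists_biproduct_hom_generating K (⊤ : Submodule K (T ⟶ W))
  have hPower := biproduct_mem_addSet T n
  obtain ⟨P₁, f, h, H⟩ := distinguished_cocone_triangle₁ g
  refine ⟨P₁, _, f, g, h, H, (hT P₁).1.2 fun t => ?_, hPower⟩
  obtain ⟨l, rfl⟩ := (isWeakKernelCokernelPair_mor₃_map_mor₁ H).exists_lift t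
    ((hT _).1.1 hPower _)
  obtain ⟨m, rfl⟩ := hg l trivial
  rw [Category.assoc, (isWeakKernelCokernelPair_mor₂_mor₃ H).zero, comp_zero]

variable {X Y Z : D} {x : X ⟶ Y} {y : Y ⟶ Z} {δ : Z ⟶ X⟦(1 : ℤ)⟧}
  (h : IsAlmostSplitTriangle D x y δ)
include h

theorem right_mem_iff : Z ∈ addSet D T ↔ X⟦(-1 : ℤ)⟧ ∈ addSet D T := by
  rw [(hT Z).2, h.hom_eq_zero_iff, hT.shift_neg_one_mem_iff]
  exact forall_map_hom_eq_zero_iff (shiftFunctor D (1 : ℤ))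

theorem left_mem_iff : X ∈ addSet D T ↔ Z⟦(1 : ℤ)⟧ ∈ addSet D T := by
  rw [(hT X).1, ← h.hom_eq_zero_iff, hT.shift_one_mem_iff]

theorem middle_notMem (hX : X ∉ addSet D T) (hZ : Z ∉ addSet D T) : Y ∉ addSet D T := by
  intro hY
  obtain ⟨H, -, -, hy⟩ := h
  refine hX ((hT X).1.2 fun f => ?_)
  obtain ⟨l, rfl⟩ : ∃ l : T ⟶ Z, l ≫ δ = f :=
    (isWeakKernelCokernelPair_mor₃_map_mor₁ H).exists_lift f ((hT Y).1.1 hY _)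
  obtain ⟨m, rfl⟩ : ∃ m : T ⟶ Y, m ≫ y = l :=
    hy l fun ⟨_, hs⟩ => hZ (mem_addSet_of_retract (self_mem_addSet T) hs)
  rw [Category.assoc, (isWeakKernelCokernelPair_mor₂_mor₃ H).zero, comp_zero]

end ClusterTilting

end Pretriangulated

/-- **Lemma 6.2.** Let `C` be a Krull–Schmidt, Hom-finite, `k`-linear triangulated
category with a cluster tilting object `T`, and let `X`, `Z` be indecomposable.
(a-1) If `X ∉ add T` and `X ∉ (add T)[1]`, then `X` admits an almost split triangle
`X → Y' → Z' → X[1]` with `Y' ∉ add T` and `Z' ∉ add T`.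
(a-2) If `X ∈ (add T)[1]`, then `X` admits an almost split triangle
`X → Y' → Z' → X[1]` with `Z' ∈ add T`.
(b-1) If `Z ∉ add T` and `Z ∉ (add T)[-1]`, then `Z` admits an almost split triangle
`X'' → Y'' → Z → X''[1]` with `Y'' ∉ add T` and `X'' ∉ add T`.
(b-2) If `Z ∈ (add T)[-1]`, then `Z` admits an almost split triangle
`X'' → Y'' → Z → X''[1]` with `X'' ∈ add T`.
Here `X ∈ (add T)[1]` is expressed as `X⟦-1⟧ ∈ add T`, and `Z ∈ (add T)[-1]` as
`Z⟦1⟧ ∈ add T`. -/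
theorem heart_stmt_14 [∀ X Y : C, FiniteDimensional k (X ⟶ Y)]
    (hKS : KrullSchmidt C) (T : C) (hT : ClusterTilting C T)
    {X Z : C} (hX : Indecomposable C X) (hZ : Indecomposable C Z) :
    ((X ∉ addSet C T ∧ X⟦(-1 : ℤ)⟧ ∉ addSet C T) →
      ∃ (Y' Z' : C) (x : X ⟶ Y') (y : Y' ⟶ Z') (δ : Z' ⟶ X⟦(1 : ℤ)⟧),
        IsAlmostSplitTriangle C x y δ ∧ Y' ∉ addSet C T ∧ Z' ∉ addSet C T) ∧
    (X⟦(-1 : ℤ)⟧ ∈ addSet C T →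
      ∃ (Y' Z' : C) (x : X ⟶ Y') (y : Y' ⟶ Z') (δ : Z' ⟶ X⟦(1 : ℤ)⟧),
        IsAlmostSplitTriangle C x y δ ∧ Z' ∈ addSet C T) ∧
    ((Z ∉ addSet C T ∧ Z⟦(1 : ℤ)⟧ ∉ addSet C T) →
      ∃ (X'' Y'' : C) (x : X'' ⟶ Y'') (y : Y'' ⟶ Z) (δ : Z ⟶ X''⟦(1 : ℤ)⟧),
        IsAlmostSplitTriangle C x y δ ∧ Y'' ∉ addSet C T ∧ X'' ∉ addSet C T) ∧
    (Z⟦(1 : ℤ)⟧ ∈ addSet C T →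
      ∃ (X'' Y'' : C) (x : X'' ⟶ Y'') (y : Y'' ⟶ Z) (δ : Z ⟶ X''⟦(1 : ℤ)⟧),
        IsAlmostSplitTriangle C x y δ ∧ X'' ∈ addSet C T) := by
  have hG := hT.isTwoTermGenerator k
  have := hX.isLocalRing_end hKS
  have := hZ.isLocalRing_end hKS
  obtain ⟨Y', Z', x, y, δ, hAR⟩ := hG.exists_isAlmostSplitTriangle_from k hKS X
  obtain ⟨X'', Y'', x', y', δ', hAR'⟩ := hG.exists_isAlmostSplitTriangle_to k hKS Z
  refine ⟨fun ⟨hXT, hXT'⟩ => ?_, fun hXT => ?_, fun ⟨hZT, hZT'⟩ => ?_, fun hZT => ?_⟩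
  · have hZ' : Z' ∉ addSet C T := mt (hT.right_mem_iff hAR).1 hXT'
    exact ⟨Y', Z', x, y, δ, hAR, hT.middle_notMem hAR hXT hZ', hZ'⟩
  · exact ⟨Y', Z', x, y, δ, hAR, (hT.right_mem_iff hAR).2 hXT⟩
  · have hX'' : X'' ∉ addSet C T := mt (hT.left_mem_iff hAR').1 hZT'
    exact ⟨X'', Y'', x', y', δ', hAR', hT.middle_notMem hAR' hX'' hZT, hX''⟩
  · exact ⟨X'', Y'', x', y', δ', hAR', (hT.left_mem_iff hAR').2 hZT⟩
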